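/- Fix reals ρ > 0 and θ > 0 and natural numbers n* ≥ 1, and define Q̂_n = (n!/n*!) ρ^{n*−n} F_n(θ)/F_{n*}(θ) for 0 ≤ n ≤ n* (note F_{n*}(θ) > 0). Then Q̂_{n*} = 1, ρ Q̂_1 = (ρ+θ) Q̂_0, and (ρ+n+θ) Q̂_n = ρ Q̂_{n+1} + n Q̂_{n−1} for all 1 ≤ n ≤ n*−1. -/

import Mathlib

open Finset

/-- F_n(θ) = Σ_{ℓ=0}^{n} [ρ^{n−ℓ}/((n−ℓ)! ℓ!)] (θ)_ℓ, with (θ)_ℓ the rising factorial. -/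
noncomputable def erlF (ρ θ : ℝ) (n : ℕ) : ℝ :=
  ∑ ℓ ∈ Finset.range (n + 1),
    ρ ^ (n - ℓ) / ((n - ℓ).factorial * ℓ.factorial) * (ascPochhammer ℝ ℓ).eval θ

/-!
The generating function `∑ F_n(θ) zⁿ = exp (ρ z) (1 - z)^(-θ)` satisfies the differential equation
`(1 - z) F' = (ρ (1 - z) + θ) F`, whose coefficients give a three-term recurrence for `F_n(θ)`.
Multiplying by `w n = n! / n*! * ρ ^ (n* - n)`, which satisfies the detailed balance relation
`ρ * w (n + 1) = (n + 1) * w n`, turns this recurrence into the Kolmogorov system.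
-/

section GeneratingFunction

open PowerSeries Nat

theorem succ_nsmul_multichoose_succ {R : Type*} [Semiring R] [BinomialRing R] (r : R) (n : ℕ) :
    (n + 1) • Ring.multichoose r (n + 1) = Ring.multichoose r n * (r + n) := by
  have : IsAddTorsionFree R := BinomialRing.toIsAddTorsionFree
  apply nsmul_right_injective n.factorial_ne_zero
  calc n ! • (n + 1) • Ring.multichoose r (n + 1)
      = (n + 1)! • Ring.multichoose r (n + 1) := by
        rw [← mul_smul, mul_comm, factorial_succ]
    _ = (ascPochhammer R n).eval r * (r + n) := by
        rw [Ring.factorial_nsmul_multichoose_eq_ascPochhammer,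
          Polynomial.ascPochhammer_smeval_eq_eval, ascPochhammer_succ_eval]
    _ = n ! • (Ring.multichoose r n * (r + n)) := by
        rw [← smul_mul_assoc, Ring.factorial_nsmul_multichoose_eq_ascPochhammer,
          Polynomial.ascPochhammer_smeval_eq_eval]

theorem derivative_rescale {R : Type*} [CommSemiring R] (a : R) (f : R⟦X⟧) :
    d⁄dX R (rescale a f) = C a * rescale a (d⁄dX R f) := by
  ext n
  simp only [coeff_derivative, coeff_rescale, coeff_C_mul]
  ring

variable {R : Type*} [CommRing R] [BinomialRing R]

/-- The binomial series `(1 - X) ^ (-r)`, encoded by its coefficients `(r)_n / n!`, which exist in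
any binomial ring. -/
noncomputable def multichooseSeries (r : R) : R⟦X⟧ :=
  mk (Ring.multichoose r)

theorem one_sub_X_mul_derivative_multichooseSeries (r : R) :
    (1 - X) * d⁄dX R (multichooseSeries r) = C r * multichooseSeries r := by
  ext n
  rw [sub_mul, one_mul, map_sub, coeff_C_mul, coeff_derivative, multichooseSeries, coeff_mk,
    coeff_mk]
  cases n with
  | zero => simp
  | succ n =>
    rw [coeff_succ_X_mul, coeff_derivative, coeff_mk]
    have h := succ_nsmul_multichoose_succ r (n + 1)
    rw [nsmul_eq_mul] at h
    push_cast at h ⊢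
    linear_combination h

variable [Algebra ℚ R]

/-- The generating function `exp (ρ X) * (1 - X) ^ (-θ)` of the sequence `F_n(θ)`. -/
noncomputable def erlSeries (ρ θ : R) : R⟦X⟧ :=
  multichooseSeries θ * rescale ρ (exp R)

theorem one_sub_X_mul_derivative_erlSeries (ρ θ : R) :
    (1 - X) * d⁄dX R (erlSeries ρ θ) = (C ρ * (1 - X) + C θ) * erlSeries ρ θ := by
  have hexp : d⁄dX R (rescale ρ (exp R)) = C ρ * rescale ρ (exp R) := by
    rw [derivative_rescale, derivative_exp]
  rw [erlSeries, Derivation.leibniz, hexp, smul_eq_mul, smul_eq_mul]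
  linear_combination rescale ρ (exp R) * one_sub_X_mul_derivative_multichooseSeries θ

theorem coeff_one_erlSeries (ρ θ : R) :
    coeff 1 (erlSeries ρ θ) = (ρ + θ) * coeff 0 (erlSeries ρ θ) := by
  have hderiv : coeff 0 (d⁄dX R (erlSeries ρ θ)) = coeff 1 (erlSeries ρ θ) := by
    simp only [coeff_derivative, zero_add, cast_zero, mul_one]
  rw [← hderiv]
  simpa using congrArg (coeff 0) (one_sub_X_mul_derivative_erlSeries ρ θ)

theorem coeff_add_two_erlSeries (ρ θ : R) (n : ℕ) :
    (n + 2) * coeff (n + 2) (erlSeries ρ θ) + ρ * coeff n (erlSeries ρ θ) =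
      (ρ + (n + 1) + θ) * coeff (n + 1) (erlSeries ρ θ) := by
  have h := congrArg (coeff (n + 1)) (one_sub_X_mul_derivative_erlSeries ρ θ)
  simp only [sub_mul, add_mul, mul_sub, mul_one, one_mul, mul_assoc, map_sub, map_add, coeff_C_mul,
    coeff_succ_X_mul, coeff_derivative] at h
  push_cast at h
  linear_combination h

end GeneratingFunction

section Recurrence

open PowerSeries Nat

theorem coeff_erlSeries (ρ θ : ℝ) (n : ℕ) : coeff n (erlSeries ρ θ) = erlF ρ θ n := by
  rw [erlSeries, coeff_mul, Nat.sum_antidiagonal_eq_sum_range_succ_mk, erlF]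
  refine sum_congr rfl fun l _ => ?_
  have hl : (l ! : ℝ) * Ring.multichoose θ l = (ascPochhammer ℝ l).eval θ := by
    rw [← nsmul_eq_mul, Ring.factorial_nsmul_multichoose_eq_ascPochhammer,
      Polynomial.ascPochhammer_smeval_eq_eval]
  rw [multichooseSeries, coeff_mk, coeff_rescale, coeff_exp, ← hl]
  simp only [one_div, map_inv₀, map_natCast]
  field_simp

theorem erlF_one (ρ θ : ℝ) : erlF ρ θ 1 = (ρ + θ) * erlF ρ θ 0 := by
  simpa only [coeff_erlSeries] using coeff_one_erlSeries ρ θ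

theorem erlF_add_two (ρ θ : ℝ) (n : ℕ) :
    (n + 2) * erlF ρ θ (n + 2) + ρ * erlF ρ θ n = (ρ + (n + 1) + θ) * erlF ρ θ (n + 1) := by
  simpa only [coeff_erlSeries] using coeff_add_two_erlSeries ρ θ n

theorem erlF_pos {ρ θ : ℝ} (hρ : 0 ≤ ρ) (hθ : 0 < θ) (n : ℕ) : 0 < erlF ρ θ n := by
  have hasc (l : ℕ) : 0 < (ascPochhammer ℝ l).eval θ := ascPochhammer_pos l θ hθ
  refine sum_pos' (fun l _ => ?_) ⟨n, self_mem_range_succ n, ?_⟩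
  · have := hasc l
    positivity
  · have := hasc n
    rw [Nat.sub_self, pow_zero]
    positivity

end Recurrence

section FirstPassage

open Nat

variable {K : Type*} [Semifield K]

/-- The ratio `π_N / π_n` of the stationary weights `π_n = ρ ^ n / n!` of the M/M/∞ queue, written
without dividing by `ρ`. Only `n ≤ N` is meaningful, because of the truncated subtraction. -/
def stationaryRatio (ρ : K) (N n : ℕ) : K :=
  (n ! : K) / N ! * ρ ^ (N - n)

theorem stationaryRatio_self [CharZero K] (ρ : K) (N : ℕ) : stationaryRatio ρ N N = 1 := by
  simp [stationaryRatio, N.factorial_ne_zero]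

theorem mul_stationaryRatio_succ (ρ : K) {N n : ℕ} (hn : n < N) :
    ρ * stationaryRatio ρ N (n + 1) = (n + 1) * stationaryRatio ρ N n := by
  have hpow : ρ ^ (N - n) = ρ ^ (N - (n + 1)) * ρ := by
    rw [← pow_succ]
    congr 1
    omega
  rw [stationaryRatio, stationaryRatio, hpow, factorial_succ]
  push_cast
  ring

/-- The closed form of `Q̂_n`, the Laplace transform at `θ` of the first passage time from state `n`
to state `N`. -/
noncomputable def firstPassageTransform (ρ θ : ℝ) (N n : ℕ) : ℝ :=
  stationaryRatio ρ N n * erlF ρ θ n / erlF ρ θ N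

theorem firstPassageTransform_self {ρ θ : ℝ} {N : ℕ} (hF : erlF ρ θ N ≠ 0) :
    firstPassageTransform ρ θ N N = 1 := by
  rw [firstPassageTransform, stationaryRatio_self, one_mul, div_self hF]

theorem mul_firstPassageTransform_one (ρ θ : ℝ) {N : ℕ} (hN : 1 ≤ N) :
    ρ * firstPassageTransform ρ θ N 1 = (ρ + θ) * firstPassageTransform ρ θ N 0 := by
  have hw : ρ * stationaryRatio ρ N 1 = stationaryRatio ρ N 0 := by
    simpa using mul_stationaryRatio_succ ρ hN
  rw [firstPassageTransform, firstPassageTransform, erlF_one, ← hw]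
  ring

theorem mul_firstPassageTransform_succ (ρ θ : ℝ) {N n : ℕ} (hn : n + 1 < N) :
    (ρ + (n + 1) + θ) * firstPassageTransform ρ θ N (n + 1) =
      ρ * firstPassageTransform ρ θ N (n + 2) + (n + 1) * firstPassageTransform ρ θ N n := by
  have hdown := mul_stationaryRatio_succ ρ (n.lt_succ_self.trans hn)
  have hup := mul_stationaryRatio_succ ρ hn
  push_cast at hup
  simp only [firstPassageTransform]
  calc (ρ + (n + 1) + θ) * (stationaryRatio ρ N (n + 1) * erlF ρ θ (n + 1) / erlF ρ θ N)
      = stationaryRatio ρ N (n + 1) * ((n + 2) * erlF ρ θ (n + 2) + ρ * erlF ρ θ n)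
          / erlF ρ θ N := by
        rw [erlF_add_two]
        ring
    _ = ((n + 1 + 1) * stationaryRatio ρ N (n + 1)) * erlF ρ θ (n + 2) / erlF ρ θ N
          + (ρ * stationaryRatio ρ N (n + 1)) * erlF ρ θ n / erlF ρ θ N := by
        ring
    _ = ρ * (stationaryRatio ρ N (n + 2) * erlF ρ θ (n + 2) / erlF ρ θ N)
          + (n + 1) * (stationaryRatio ρ N n * erlF ρ θ n / erlF ρ θ N) := by
        rw [← hup, hdown]
        ring

end FirstPassage

theorem mminf_first_passage_transform_general (ρ θ : ℝ) (nst : ℕ) (hnst : 1 ≤ nst)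
    (hF : erlF ρ θ nst ≠ 0) (Q : ℕ → ℝ)
    (hQ : ∀ n : ℕ, n ≤ nst →
      Q n = (n.factorial : ℝ) / nst.factorial * ρ ^ (nst - n) * erlF ρ θ n
        / erlF ρ θ nst) :
    Q nst = 1
    ∧ ρ * Q 1 = (ρ + θ) * Q 0
    ∧ ∀ n : ℕ, 1 ≤ n → n ≤ nst - 1 →
        (ρ + n + θ) * Q n = ρ * Q (n + 1) + (n : ℝ) * Q (n - 1) := by
  replace hQ : ∀ n ≤ nst, Q n = firstPassageTransform ρ θ nst n := hQ
  refine ⟨?_, ?_, fun n hn hn' => ?_⟩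
  · rw [hQ nst le_rfl, firstPassageTransform_self hF]
  · rw [hQ 1 hnst, hQ 0 nst.zero_le, mul_firstPassageTransform_one ρ θ hnst]
  · obtain ⟨k, rfl⟩ := Nat.exists_eq_add_of_le' hn
    rw [Nat.add_sub_cancel, hQ (k + 1) (by omega), hQ (k + 2) (by omega), hQ k (by omega)]
    exact_mod_cast mul_firstPassageTransform_succ ρ θ (show k + 1 < nst by omega)

/-- Q̂_n = (n!/n*!) ρ^{n*−n} F_n(θ)/F_{n*}(θ) solves the
Laplace-transformed backward Kolmogorov system for the first passage time to level n*
of the M/M/∞ queue, and F_{n*}(θ) > 0. -/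
theorem mminf_first_passage_transform (ρ θ : ℝ) (hρ : 0 < ρ) (hθ : 0 < θ)
    (nst : ℕ) (hnst : 1 ≤ nst) (Q : ℕ → ℝ)
    (hQ : ∀ n : ℕ, n ≤ nst →
      Q n = (n.factorial : ℝ) / nst.factorial * ρ ^ (nst - n) * erlF ρ θ n
        / erlF ρ θ nst) :
    0 < erlF ρ θ nst
    ∧ Q nst = 1
    ∧ ρ * Q 1 = (ρ + θ) * Q 0
    ∧ ∀ n : ℕ, 1 ≤ n → n ≤ nst - 1 →
        (ρ + n + θ) * Q n = ρ * Q (n + 1) + (n : ℝ) * Q (n - 1) := by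
  have hF : 0 < erlF ρ θ nst := erlF_pos hρ.le hθ nst
  exact ⟨hF, mminf_first_passage_transform_general ρ θ nst hnst hF.ne' Q hQ⟩
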